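/- Let λ > 0 and α, α_0, α̃, α̃_0 ∈ (0,1] with α̃/α > α̃_0/α_0. Let {N(t) : t ≥ 0} be random variables with P(N(t) = 0) proportional to 1/E^1_{α_0,1}(λ t^{α̃_0}) and, for integers k ≥ 1, P(N(t) = k) proportional to (λ t^{α̃})^k / ( Γ(αk+1) · E^1_{α,1}(λ t^{α̃}) ) (normalized so the probabilities sum to 1). Then for every θ ∈ ℝ the limit Ψ(θ) := lim_{t→∞} t^{−α̃/α} log E[e^{θ N(t)}] exists and Ψ(θ) = max{ λ^{1/α}(e^{θ/α} − 1), 0 }; in particular Ψ is not differentiable at θ = 0, its left derivative at 0 being 0 and its right derivative at 0 being λ^{1/α}/α. -/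

import Mathlib

open Filter Topology

/-- The classical Mittag-Leffler function `E^1_{α,1}(u) = ∑_{k≥0} u^k / Γ(αk+1)`. -/
noncomputable def mittagLeffler (α : ℝ) (u : ℝ) : ℝ :=
  ∑' k : ℕ, u ^ k / Real.Gamma (α * (k : ℝ) + 1)

/-- Unnormalized weights of the model in Section 4.2.2 of the paper:
`w(t,0) = 1/E^1_{α_0,1}(λt^{α̃_0})` and
`w(t,k) = (λt^{α̃})^k/(Γ(αk+1) E^1_{α,1}(λt^{α̃}))` for `k ≥ 1`. -/
noncomputable def wgt (lam α α0 αt αt0 : ℝ) (t : ℝ) (k : ℕ) : ℝ :=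
  if k = 0 then 1 / mittagLeffler α0 (lam * t ^ αt0)
  else (lam * t ^ αt) ^ k / (Real.Gamma (α * (k : ℝ) + 1) * mittagLeffler α (lam * t ^ αt))

/-- `P(N(t) = k)`, the weights normalized to sum to `1`. -/
noncomputable def pmfCtr (lam α α0 αt αt0 : ℝ) (t : ℝ) (k : ℕ) : ℝ :=
  wgt lam α α0 αt αt0 t k / ∑' j : ℕ, wgt lam α α0 αt αt0 t j

/-- `Ψ(θ) = max{λ^{1/α}(e^{θ/α} - 1), 0}`. -/
noncomputable def PsiFun (lam α : ℝ) (θ : ℝ) : ℝ :=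
  max (lam ^ (1 / α) * (Real.exp (θ / α) - 1)) 0

lemma ml_gamma_lower (x : ℝ) (hx : 0 ≤ x) : ((⌊x⌋₊).factorial : ℝ) / 2 ≤ Real.Gamma (x + 1) := by
  have h1 : Real.Gamma (x + 1 + 1) = (x + 1) * Real.Gamma (x + 1) :=
    Real.Gamma_add_one (by positivity)
  have hfl := Nat.floor_le hx
  have hfl2 := Nat.lt_floor_add_one x
  set n := ⌊x⌋₊ with hn
  have h2 : Real.Gamma ((n + 1 : ℕ) + 1 : ℝ) ≤ Real.Gamma (x + 1 + 1) := by
    apply Real.Gamma_strictMonoOn_Ici.monotoneOn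
    · simp only [Set.mem_Ici]; push_cast; have : (0:ℝ) ≤ n := by positivity
      linarith
    · simp only [Set.mem_Ici]; linarith
    · push_cast; linarith
  rw [Real.Gamma_nat_eq_factorial, h1, Nat.factorial_succ] at h2
  push_cast at h2
  have hG : 0 < Real.Gamma (x + 1) := Real.Gamma_pos_of_pos (by linarith)
  have hn0 : (0:ℝ) ≤ n := by positivity
  have hf : (0:ℝ) < (n.factorial : ℝ) := by positivity
  by_contra hcon
  push Not at hcon
  have : (x + 1) * Real.Gamma (x + 1) < (n + 2) * ((n.factorial : ℝ) / 2) := by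
    apply mul_lt_mul'' (by linarith) hcon (by linarith) hG.le
  nlinarith

lemma ml_gamma_upper (α : ℝ) (h0 : 0 < α) (h1 : α ≤ 1) (n : ℕ) :
    Real.Gamma (α * (⌈(n:ℝ) / α⌉₊ : ℝ) + 1) ≤ ((n + 1).factorial : ℝ) := by
  rcases Nat.eq_zero_or_pos n with rfl | hn
  · simp
  have hle : (n:ℝ) / α ≤ (⌈(n:ℝ) / α⌉₊ : ℝ) := Nat.le_ceil _
  have hlt : (⌈(n:ℝ) / α⌉₊ : ℝ) < (n:ℝ) / α + 1 := Nat.ceil_lt_add_one (by positivity)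
  have a1 : (n:ℝ) ≤ α * (⌈(n:ℝ) / α⌉₊ : ℝ) := by
    rw [div_le_iff₀ h0] at hle; linarith
  have a2 : α * (⌈(n:ℝ) / α⌉₊ : ℝ) ≤ n + 1 := by
    have := mul_le_mul_of_nonneg_left hlt.le h0.le
    rw [mul_add, mul_div_cancel₀ _ h0.ne'] at this
    linarith
  have hn1 : (1:ℝ) ≤ n := by exact_mod_cast hn
  rw [← Real.Gamma_nat_eq_factorial]
  apply Real.Gamma_strictMonoOn_Ici.monotoneOn
  · simp only [Set.mem_Ici]; linarith
  · simp only [Set.mem_Ici]; push_cast; linarith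
  · push_cast; linarith

lemma ml_term (α s : ℝ) (h0 : 0 < α) (hs : 0 < s) (k : ℕ) :
    (s ^ α) ^ k / Real.Gamma (α * (k : ℝ) + 1) ≤
      2 * (s + 1) * Real.exp (s + 1) * ((s / (s + 1)) ^ α) ^ k := by
  have hx : 0 ≤ α * (k:ℝ) := by positivity
  rw [← Real.rpow_mul_natCast hs.le, ← Real.rpow_mul_natCast (by positivity),
    Real.div_rpow hs.le (by positivity)]
  generalize α * (k:ℝ) = x at hx
  have hG := ml_gamma_lower x hx
  have hG0 : 0 < Real.Gamma (x + 1) := Real.Gamma_pos_of_pos (by linarith)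
  have hexp := Real.pow_div_factorial_le_exp (s + 1) (by positivity) ⌊x⌋₊
  have hfl2 := Nat.lt_floor_add_one x
  have hp : (s + 1) ^ x ≤ (s + 1) ^ ⌊x⌋₊ * (s + 1) := by
    rw [← pow_succ, ← Real.rpow_natCast]
    apply Real.rpow_le_rpow_of_exponent_le (by linarith)
    push_cast; exact hfl2.le
  have hf : (0:ℝ) < ((⌊x⌋₊).factorial : ℝ) := by positivity
  rw [div_le_iff₀ hf] at hexp
  have hA : 0 < (s+1) ^ x := by positivity
  have hB : 0 < s ^ x := by positivity
  have key : (s + 1) ^ x ≤ 2 * (s + 1) * Real.exp (s + 1) * Real.Gamma (x + 1) := by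
    calc (s + 1) ^ x ≤ (s + 1) ^ ⌊x⌋₊ * (s + 1) := hp
      _ ≤ (Real.exp (s + 1) * ((⌊x⌋₊).factorial : ℝ)) * (s + 1) := by gcongr
      _ ≤ (Real.exp (s + 1) * (2 * Real.Gamma (x + 1))) * (s + 1) := by
          gcongr; linarith
      _ = _ := by ring
  rw [div_le_iff₀ hG0, show 2 * (s + 1) * Real.exp (s + 1) * (s ^ x / (s + 1) ^ x) * Real.Gamma (x + 1)
    = s ^ x * (2 * (s + 1) * Real.exp (s + 1) * Real.Gamma (x + 1)) / (s + 1) ^ x by ring,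
    le_div_iff₀ hA]
  exact mul_le_mul_of_nonneg_left key hB.le

lemma ml_ratio (α s : ℝ) (h0 : 0 < α) (h1 : α ≤ 1) (hs : 0 < s) :
    (s / (s + 1)) ^ α ≤ 1 - α / (s + 1) := by
  have h : s / (s + 1) = 1 + (-(1 / (s + 1))) := by field_simp; try ring
  rw [h]
  refine (rpow_one_add_le_one_add_mul_self ?_ h0.le h1).trans_eq ?_
  · rw [neg_le_neg_iff, div_le_one (by positivity)]; linarith
  · ring

lemma ml_summable (α s : ℝ) (h0 : 0 < α) (h1 : α ≤ 1) (hs : 0 < s) :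
    Summable (fun k : ℕ => (s ^ α) ^ k / Real.Gamma (α * (k : ℝ) + 1)) := by
  have hr := ml_ratio α s h0 h1 hs
  have : 0 < α / (s + 1) := by positivity
  refine Summable.of_nonneg_of_le (fun k => ?_) (ml_term α s h0 hs)
    ((summable_geometric_of_lt_one (by positivity) (by linarith)).mul_left _)
  have : 0 < Real.Gamma (α * (k : ℝ) + 1) := Real.Gamma_pos_of_pos (by positivity)
  positivity

lemma ml_upper (α s : ℝ) (h0 : 0 < α) (h1 : α ≤ 1) (hs : 0 < s) :
    mittagLeffler α (s ^ α) ≤ 2 / α * (s + 1) ^ 2 * Real.exp (s + 1) := by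
  have hr := ml_ratio α s h0 h1 hs
  have hr0 : 0 < α / (s + 1) := by positivity
  have hr1 : (s / (s + 1)) ^ α < 1 := by linarith
  have hn : 0 ≤ (s / (s + 1)) ^ α := by positivity
  have hS := (summable_geometric_of_lt_one hn hr1).mul_left
    (2 * (s + 1) * Real.exp (s + 1))
  refine ((ml_summable α s h0 h1 hs).tsum_le_tsum (ml_term α s h0 hs) hS).trans ?_
  rw [tsum_mul_left, tsum_geometric_of_lt_one hn hr1]
  have : (1 - (s / (s + 1)) ^ α)⁻¹ ≤ (s + 1) / α := by
    rw [← inv_div α (s + 1)]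
    exact inv_anti₀ hr0 (by linarith)
  calc _ ≤ 2 * (s + 1) * Real.exp (s + 1) * ((s + 1) / α) := by gcongr
    _ = _ := by ring

lemma ml_lower (α s : ℝ) (h0 : 0 < α) (h1 : α ≤ 1) (hs : 1 ≤ s) :
    Real.exp s - 1 ≤ s * mittagLeffler α (s ^ α) := by
  have hs0 : 0 < s := by linarith
  have hE : HasSum (fun n : ℕ => s ^ n / (n.factorial : ℝ)) (Real.exp s) := by
    rw [Real.exp_eq_exp_ℝ]; exact NormedSpace.expSeries_div_hasSum_exp s
  have hE1 : HasSum (fun n : ℕ => s ^ (n+1) / ((n+1).factorial : ℝ)) (Real.exp s - 1) := by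
    have := (hasSum_nat_add_iff' 1).2 hE
    simpa using this
  rw [← hE1.tsum_eq, mittagLeffler, ← tsum_mul_left]
  have hinj : Function.Injective (fun n : ℕ => ⌈(n:ℝ) / α⌉₊) := by
    apply StrictMono.injective
    apply strictMono_nat_of_lt_succ
    intro n
    have : ((n:ℝ) / α) + 1 ≤ ((n + 1 : ℕ) : ℝ) / α := by
      rw [div_add_one h0.ne']
      gcongr
      push_cast; linarith
    have h2 := Nat.ceil_mono this
    rw [Nat.ceil_add_one (by positivity)] at h2
    omega
  refine Summable.tsum_le_tsum_of_inj _ hinj (fun c _ => ?_) (fun n => ?_) hE1.summable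
    ((ml_summable α s h0 h1 hs0).mul_left s)
  · have : 0 < Real.Gamma (α * (c : ℝ) + 1) := Real.Gamma_pos_of_pos (by positivity)
    positivity
  · have hG := ml_gamma_upper α h0 h1 n
    have hG0 : 0 < Real.Gamma (α * (⌈(n:ℝ) / α⌉₊ : ℝ) + 1) := Real.Gamma_pos_of_pos (by positivity)
    have hp : s ^ n ≤ (s ^ α) ^ ⌈(n:ℝ) / α⌉₊ := by
      rw [← Real.rpow_mul_natCast hs0.le, ← Real.rpow_natCast]
      apply Real.rpow_le_rpow_of_exponent_le hs
      have := Nat.le_ceil ((n:ℝ) / α)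
      rw [div_le_iff₀ h0] at this; linarith
    rw [pow_succ', mul_div_assoc]
    gcongr

lemma ml_log (α : ℝ) (h0 : 0 < α) (h1 : α ≤ 1) :
    Tendsto (fun s : ℝ => Real.log (mittagLeffler α (s ^ α)) / s) atTop (𝓝 1) := by
  have l1 : Tendsto (fun s : ℝ => Real.log s / s) atTop (𝓝 0) := by
    simpa using Real.isLittleO_log_id_atTop.tendsto_div_nhds_zero
  have c (C : ℝ) : Tendsto (fun s : ℝ => C / s) atTop (𝓝 0) :=
    tendsto_const_nhds.div_atTop tendsto_id
  have t1 : Tendsto (fun s : ℝ => 1 - Real.log 2 / s - Real.log s / s) atTop (𝓝 1) := by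
    simpa using (tendsto_const_nhds.sub (c (Real.log 2))).sub l1
  have t2 : Tendsto (fun s : ℝ => 1 + (Real.log (2 / α) + 2 * Real.log 2 + 1) / s
      + 2 * (Real.log s / s)) atTop (𝓝 1) := by
    simpa using (tendsto_const_nhds.add (c _)).add (l1.const_mul 2)
  have hb (s : ℝ) (hs : 1 ≤ s) : 0 < mittagLeffler α (s ^ α) ∧
      Real.exp s / 2 ≤ s * mittagLeffler α (s ^ α) := by
    have hl := ml_lower α s h0 h1 hs
    have he := Real.add_one_le_exp s
    refine ⟨?_, by linarith⟩
    have : 0 < s * mittagLeffler α (s ^ α) := by linarith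
    exact (mul_pos_iff_of_pos_left (by linarith)).1 this
  refine tendsto_of_tendsto_of_tendsto_of_le_of_le' t1 t2 ?_ ?_
  · filter_upwards [eventually_ge_atTop 1] with s hs
    have hs0 : 0 < s := by linarith
    obtain ⟨hp, hb⟩ := hb s hs
    have := Real.log_le_log (by positivity) hb
    rw [Real.log_mul hs0.ne' hp.ne', Real.log_div (by positivity) (by norm_num), Real.log_exp] at this
    rw [le_div_iff₀ hs0]
    have e : (1 - Real.log 2 / s - Real.log s / s) * s = s - Real.log 2 - Real.log s := by field_simp
    linarith
  · filter_upwards [eventually_ge_atTop 1] with s hs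
    have hs0 : 0 < s := by linarith
    obtain ⟨hp, -⟩ := hb s hs
    have h3 : mittagLeffler α (s ^ α) ≤ 2 / α * (2 * s) ^ 2 * Real.exp (s + 1) := by
      refine (ml_upper α s h0 h1 hs0).trans ?_
      gcongr; linarith
    have := Real.log_le_log hp h3
    rw [Real.log_mul (by positivity) (by positivity), Real.log_mul (by positivity) (by positivity),
      Real.log_pow, Real.log_exp, Real.log_mul (by norm_num) hs0.ne'] at this
    rw [div_le_iff₀ hs0]
    have e : (1 + (Real.log (2 / α) + 2 * Real.log 2 + 1) / s
      + 2 * (Real.log s / s)) * s = s + (Real.log (2 / α) + 2 * Real.log 2 + 1) + 2 * Real.log s := by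
      field_simp
    push_cast at this
    linarith

lemma ml_hasSum (α u : ℝ) (h0 : 0 < α) (h1 : α ≤ 1) (hu : 0 < u) :
    HasSum (fun k : ℕ => u ^ k / Real.Gamma (α * (k : ℝ) + 1)) (mittagLeffler α u) := by
  have := (ml_summable α (u ^ (1/α)) h0 h1 (by positivity)).hasSum
  rw [← Real.rpow_mul hu.le, one_div_mul_cancel h0.ne', Real.rpow_one] at this
  exact this

lemma ml_scale (α c p : ℝ) (h0 : 0 < α) (hc : 0 < c) (t : ℝ) (ht : 0 < t) :
    (c ^ (1/α) * t ^ (p / α)) ^ α = c * t ^ p := by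
  rw [Real.mul_rpow (by positivity) (by positivity), ← Real.rpow_mul hc.le, ← Real.rpow_mul ht.le,
    one_div_mul_cancel h0.ne', div_mul_cancel₀ _ h0.ne', Real.rpow_one]

lemma ml_arg (α c p : ℝ) (h0 : 0 < α) (hc : 0 < c) (hp : 0 < p) :
    Tendsto (fun t : ℝ => c ^ (1/α) * t ^ (p / α)) atTop atTop :=
  (tendsto_rpow_atTop (by positivity)).const_mul_atTop (by positivity)

lemma ml_scaled (α c p : ℝ) (h0 : 0 < α) (h1 : α ≤ 1) (hc : 0 < c) (hp : 0 < p) :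
    Tendsto (fun t : ℝ => t ^ (-(p / α)) * Real.log (mittagLeffler α (c * t ^ p))) atTop
      (𝓝 (c ^ (1 / α))) := by
  have h := ((ml_log α h0 h1).comp (ml_arg α c p h0 hc hp)).const_mul (c ^ (1/α))
  rw [mul_one] at h
  refine h.congr' ?_
  filter_upwards [eventually_gt_atTop 0] with t ht
  simp only [Function.comp]
  rw [ml_scale α c p h0 hc t ht, Real.rpow_neg ht.le]
  have : 0 < c ^ (1/α) := by positivity
  have : 0 < t ^ (p/α) := by positivity
  field_simp

lemma ml_two (α c p : ℝ) (h0 : 0 < α) (h1 : α ≤ 1) (hc : 0 < c) (hp : 0 < p) :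
    ∀ᶠ t : ℝ in atTop, 2 ≤ mittagLeffler α (c * t ^ p) := by
  filter_upwards [eventually_gt_atTop 0, (ml_arg α c p h0 hc hp).eventually_ge_atTop 2] with t ht hs
  rw [← ml_scale α c p h0 hc t ht]
  set s := c ^ (1/α) * t ^ (p / α)
  have hl := ml_lower α s h0 h1 (by linarith)
  have := Real.quadratic_le_exp_of_nonneg (x := s) (by linarith)
  by_contra hcon
  push Not at hcon
  nlinarith

lemma wgt_sum (lam α α0 αt αt0 : ℝ) (hlam : 0 < lam) (h0 : 0 < α) (h1 : α ≤ 1) (θ t : ℝ)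
    (ht : 0 < t) :
    HasSum (fun k : ℕ => Real.exp (θ * (k:ℝ)) * wgt lam α α0 αt αt0 t k)
      (1 / mittagLeffler α0 (lam * t ^ αt0) +
        (mittagLeffler α (Real.exp θ * lam * t ^ αt) - 1) / mittagLeffler α (lam * t ^ αt)) := by
  have hv := (ml_hasSum α (Real.exp θ * lam * t ^ αt) h0 h1 (by positivity)).div_const
    (mittagLeffler α (lam * t ^ αt))
  have hi := hasSum_ite_eq (0:ℕ) (1 / mittagLeffler α0 (lam * t ^ αt0)
    - 1 / mittagLeffler α (lam * t ^ αt))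
  have e : ∀ k : ℕ, Real.exp (θ * (k:ℝ)) * wgt lam α α0 αt αt0 t k =
      (Real.exp θ * lam * t ^ αt) ^ k / Real.Gamma (α * (k:ℝ) + 1) / mittagLeffler α (lam * t ^ αt)
      + (if k = 0 then 1 / mittagLeffler α0 (lam * t ^ αt0)
    - 1 / mittagLeffler α (lam * t ^ αt) else 0) := by
    intro k
    unfold wgt
    split_ifs with hk
    · subst hk; simp
    · rw [mul_comm θ, Real.exp_nat_mul, mul_assoc (Real.exp θ), mul_pow (Real.exp θ), add_zero,
        div_div, mul_div_assoc]
  have e2 : 1 / mittagLeffler α0 (lam * t ^ αt0) +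
        (mittagLeffler α (Real.exp θ * lam * t ^ αt) - 1) / mittagLeffler α (lam * t ^ αt) =
      mittagLeffler α (Real.exp θ * lam * t ^ αt) / mittagLeffler α (lam * t ^ αt) +
      (1 / mittagLeffler α0 (lam * t ^ αt0) - 1 / mittagLeffler α (lam * t ^ αt)) := by ring
  simp only [e]
  rw [e2]
  exact hv.add hi

lemma scaled_max (T a b : ℝ → ℝ) (A B : ℝ) (hT : Tendsto T atTop (𝓝 0))
    (hT0 : ∀ᶠ t in atTop, 0 < T t)
    (ha0 : ∀ᶠ t in atTop, 0 < a t) (hb0 : ∀ᶠ t in atTop, 0 < b t)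
    (ha : Tendsto (fun t => T t * Real.log (a t)) atTop (𝓝 A))
    (hb : Tendsto (fun t => T t * Real.log (b t)) atTop (𝓝 B)) :
    Tendsto (fun t => T t * Real.log (a t + b t)) atTop (𝓝 (max B A)) := by
  have hm := hb.max ha
  have hm2 := (hT.mul_const (Real.log 2)).add hm
  rw [zero_mul, zero_add] at hm2
  refine tendsto_of_tendsto_of_tendsto_of_le_of_le' hm hm2 ?_ ?_
  · filter_upwards [hT0, ha0, hb0] with t h1 h2 h3
    apply max_le <;> gcongr <;> linarith
  · filter_upwards [hT0, ha0, hb0] with t h1 h2 h3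
    have key : Real.log (a t + b t) ≤ Real.log 2 + max (Real.log (b t)) (Real.log (a t)) := by
      rcases le_total (a t) (b t) with h | h
      · have := Real.log_le_log (by linarith) (show a t + b t ≤ 2 * b t by linarith)
        rw [Real.log_mul (by norm_num) h3.ne'] at this
        linarith [le_max_left (Real.log (b t)) (Real.log (a t))]
      · have := Real.log_le_log (by linarith) (show a t + b t ≤ 2 * a t by linarith)
        rw [Real.log_mul (by norm_num) h2.ne'] at this
        linarith [le_max_right (Real.log (b t)) (Real.log (a t))]
    rw [← mul_max_of_nonneg _ _ h1.le, ← mul_add]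
    gcongr

lemma scaled_bdd (T d : ℝ → ℝ) (hT : Tendsto T atTop (𝓝 0))
    (hd : ∀ᶠ t in atTop, 1 / 2 ≤ d t ∧ d t ≤ 2) :
    Tendsto (fun t => T t * Real.log (d t)) atTop (𝓝 0) := by
  refine hT.zero_mul_isBoundedUnder_le ?_
  refine ⟨Real.log 2, ?_⟩
  rw [eventually_map]
  filter_upwards [hd] with t ⟨h1, h2⟩
  simp only [Function.comp, Real.norm_eq_abs]
  rw [abs_le]
  constructor
  · rw [← Real.log_inv]
    exact Real.log_le_log (by norm_num) (by linarith)
  · exact Real.log_le_log (by linarith) h2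

lemma psi_tendsto
    (lam α α0 αt αt0 : ℝ) (hlam : 0 < lam)
    (hα : α ∈ Set.Ioc (0 : ℝ) 1) (hα0 : α0 ∈ Set.Ioc (0 : ℝ) 1)
    (hαt : αt ∈ Set.Ioc (0 : ℝ) 1) (hαt0 : αt0 ∈ Set.Ioc (0 : ℝ) 1)
    (hcase : αt0 / α0 < αt / α) (θ : ℝ) :
      Tendsto (fun t : ℝ => t ^ (-(αt / α)) *
          Real.log (∑' k : ℕ, Real.exp (θ * (k : ℝ)) * pmfCtr lam α α0 αt αt0 t k))
        atTop (𝓝 (PsiFun lam α θ)) := by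
  obtain ⟨h0, h1⟩ := hα
  obtain ⟨h00, h01⟩ := hα0
  have hp := hαt.1
  have hp0 := hαt0.1
  have hq : 0 < αt / α := by positivity
  have hT : Tendsto (fun t : ℝ => t ^ (-(αt / α))) atTop (𝓝 0) := tendsto_rpow_neg_atTop hq
  have hT0 : ∀ᶠ t : ℝ in atTop, 0 < t ^ (-(αt / α)) := by
    filter_upwards [eventually_gt_atTop 0] with t ht
    positivity
  have e0 := ml_two α0 lam αt0 h00 h01 hlam hp0
  have e1 := ml_two α lam αt h0 h1 hlam hp
  have hc : 0 < Real.exp θ * lam := by positivity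
  have e2 := ml_two α (Real.exp θ * lam) αt h0 h1 hc hp
  -- first part
  have hA : Tendsto (fun t : ℝ => t ^ (-(αt / α)) *
      Real.log (1 / mittagLeffler α0 (lam * t ^ αt0))) atTop (𝓝 0) := by
    have hx := (tendsto_rpow_neg_atTop (sub_pos.2 hcase)).mul
      (ml_scaled α0 lam αt0 h00 h01 hlam hp0)
    have hx2 := hx.neg
    rw [zero_mul, neg_zero] at hx2
    refine hx2.congr' ?_
    filter_upwards [eventually_gt_atTop 0] with t ht
    rw [← mul_assoc, ← Real.rpow_add ht, one_div, Real.log_inv, mul_neg]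
    congr 3
    ring
  have hB1 : Tendsto (fun t : ℝ => t ^ (-(αt / α)) *
      Real.log ((mittagLeffler α (Real.exp θ * lam * t ^ αt) - 1)
        / mittagLeffler α (Real.exp θ * lam * t ^ αt))) atTop (𝓝 0) := by
    apply scaled_bdd _ _ hT
    filter_upwards [e2] with t ht
    constructor
    · rw [le_div_iff₀ (by linarith)]; linarith
    · rw [div_le_iff₀ (by linarith)]; linarith
  have hB : Tendsto (fun t : ℝ => t ^ (-(αt / α)) *
      Real.log ((mittagLeffler α (Real.exp θ * lam * t ^ αt) - 1)
        / mittagLeffler α (lam * t ^ αt))) atTop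
        (𝓝 (lam ^ (1 / α) * (Real.exp (θ / α) - 1))) := by
    have hx := (hB1.add (ml_scaled α _ αt h0 h1 hc hp)).sub (ml_scaled α lam αt h0 h1 hlam hp)
    have e : 0 + (Real.exp θ * lam) ^ (1 / α) - lam ^ (1 / α)
        = lam ^ (1 / α) * (Real.exp (θ / α) - 1) := by
      rw [Real.mul_rpow (by positivity) hlam.le, ← Real.exp_mul, mul_one_div]
      ring
    rw [e] at hx
    refine hx.congr' ?_
    filter_upwards [e1, e2] with t h3 h4
    rw [Real.log_div (by linarith) (by linarith), Real.log_div (by linarith) (by linarith)]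
    ring
  have hD : Tendsto (fun t : ℝ => t ^ (-(αt / α)) *
      Real.log (1 / mittagLeffler α0 (lam * t ^ αt0) +
        (mittagLeffler α (lam * t ^ αt) - 1) / mittagLeffler α (lam * t ^ αt))) atTop (𝓝 0) := by
    apply scaled_bdd _ _ hT
    filter_upwards [e0, e1] with t h3 h4
    have a1 : 0 < 1 / mittagLeffler α0 (lam * t ^ αt0) := by positivity
    have a2 : 1 / mittagLeffler α0 (lam * t ^ αt0) ≤ 1 := by
      rw [div_le_one (by linarith)]; linarith
    have a3 : 1 / 2 ≤ (mittagLeffler α (lam * t ^ αt) - 1) / mittagLeffler α (lam * t ^ αt) := by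
      rw [le_div_iff₀ (by linarith)]; linarith
    have a4 : (mittagLeffler α (lam * t ^ αt) - 1) / mittagLeffler α (lam * t ^ αt) ≤ 1 := by
      rw [div_le_one (by linarith)]; linarith
    constructor <;> linarith
  have hpa : ∀ᶠ t : ℝ in atTop, 0 < 1 / mittagLeffler α0 (lam * t ^ αt0) := by
    filter_upwards [e0] with t h3
    positivity
  have hpb : ∀ᶠ t : ℝ in atTop, 0 < (mittagLeffler α (Real.exp θ * lam * t ^ αt) - 1)
        / mittagLeffler α (lam * t ^ αt) := by
    filter_upwards [e1, e2] with t h3 h4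
    apply div_pos <;> linarith
  have hN := (scaled_max _ _ _ _ _ hT hT0 hpa hpb hA hB).sub hD
  rw [sub_zero] at hN
  refine hN.congr' ?_
  filter_upwards [e0, e1, hpa, hpb, eventually_gt_atTop 0] with t h3 h4 h5 h6 ht
  have hZ := wgt_sum lam α α0 αt αt0 hlam h0 h1 0 t ht
  simp only [zero_mul, Real.exp_zero, one_mul] at hZ
  have hS := (wgt_sum lam α α0 αt αt0 hlam h0 h1 θ t ht).div_const
    (∑' j : ℕ, wgt lam α α0 αt αt0 t j)
  simp only [pmfCtr, ← mul_div_assoc]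
  rw [hS.tsum_eq, hZ.tsum_eq, Real.log_div (by positivity), mul_sub]
  have : 0 < (mittagLeffler α (lam * t ^ αt) - 1) / mittagLeffler α (lam * t ^ αt) := by
    apply div_pos <;> linarith
  positivity

lemma psi_left (lam α : ℝ) (hlam : 0 < lam) (h0 : 0 < α) :
    HasDerivWithinAt (PsiFun lam α) 0 (Set.Iic 0) 0 := by
  refine (hasDerivWithinAt_const (0:ℝ) (Set.Iic 0) (0:ℝ)).congr (fun θ hθ => ?_) ?_
  · unfold PsiFun
    apply max_eq_right
    have : Real.exp (θ / α) ≤ 1 := Real.exp_le_one_iff.2 (div_nonpos_of_nonpos_of_nonneg hθ h0.le)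
    have : 0 < lam ^ (1 / α) := by positivity
    nlinarith
  · simp [PsiFun]

lemma psi_right (lam α : ℝ) (hlam : 0 < lam) (h0 : 0 < α) :
    HasDerivWithinAt (PsiFun lam α) (lam ^ (1 / α) / α) (Set.Ici 0) 0 := by
  have hd : HasDerivAt (fun θ : ℝ => lam ^ (1 / α) * (Real.exp (θ / α) - 1)) (lam ^ (1 / α) / α) 0 := by
    have := ((((hasDerivAt_id (0:ℝ)).div_const α).exp).sub_const 1).const_mul (lam ^ (1 / α))
    simpa [div_eq_mul_inv] using this
  refine hd.hasDerivWithinAt.congr (fun θ hθ => ?_) ?_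
  · unfold PsiFun
    apply max_eq_left
    have : 1 ≤ Real.exp (θ / α) := Real.one_le_exp (div_nonneg hθ h0.le)
    have : 0 < lam ^ (1 / α) := by positivity
    nlinarith
  · simp [PsiFun]

/-- Section 4.2.2 of the paper: for the model where Condition (B3) fails
(`α̃/α > α̃_0/α_0`), the scaled cumulant limit `Ψ(θ) = lim t^{-α̃/α} log E[e^{θN(t)}]`
exists, equals `max{λ^{1/α}(e^{θ/α}-1), 0}`, and is not differentiable at `0`: its
left derivative at `0` is `0` and its right derivative at `0` is `λ^{1/α}/α`. -/
theorem counterexample_Psi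
    (lam α α0 αt αt0 : ℝ) (hlam : 0 < lam)
    (hα : α ∈ Set.Ioc (0 : ℝ) 1) (hα0 : α0 ∈ Set.Ioc (0 : ℝ) 1)
    (hαt : αt ∈ Set.Ioc (0 : ℝ) 1) (hαt0 : αt0 ∈ Set.Ioc (0 : ℝ) 1)
    (hcase : αt0 / α0 < αt / α) :
    (∀ θ : ℝ,
      Tendsto (fun t : ℝ => t ^ (-(αt / α)) *
          Real.log (∑' k : ℕ, Real.exp (θ * (k : ℝ)) * pmfCtr lam α α0 αt αt0 t k))
        atTop (𝓝 (PsiFun lam α θ))) ∧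
    ¬ DifferentiableAt ℝ (PsiFun lam α) 0 ∧
    HasDerivWithinAt (PsiFun lam α) 0 (Set.Iic 0) 0 ∧
    HasDerivWithinAt (PsiFun lam α) (lam ^ (1 / α) / α) (Set.Ici 0) 0 := by
  refine ⟨psi_tendsto lam α α0 αt αt0 hlam hα hα0 hαt hαt0 hcase, fun hdiff => ?_,
    psi_left lam α hlam hα.1, psi_right lam α hlam hα.1⟩
  have hd := hdiff.hasDerivAt
  have l := (uniqueDiffOn_Iic (0:ℝ) 0 (by simp)).eq_deriv _ hd.hasDerivWithinAt
    (psi_left lam α hlam hα.1)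
  have r := (uniqueDiffOn_Ici (0:ℝ) 0 (by simp)).eq_deriv _ hd.hasDerivWithinAt
    (psi_right lam α hlam hα.1)
  have h0 := hα.1
  have : 0 < lam ^ (1 / α) / α := by positivity
  linarith
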